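/- Let ε > 0 and suppose (Z₁, Z₂, y) are positive reals with Z_i ≥ X^{5/6}(log X)⁵. Suppose A ⊆ {α ∈ ℝ : y < |α| ≤ 2y} is a measurable set such that every α ∈ A admits coprime integer pairs (a₁,q₁), (a₂,q₂) with a₁a₂ ≠ 0, q_i ≥ 1, q_i ≪ (X(log X)⁴/Z_i)², |q_iλ_iα − a_i| ≪ X(log X)^{10}/Z_i², where λ₁/λ₂ is irrational and q = X^{1/3} is a denominator of a convergent of λ₁/λ₂. Then the Lebesgue measure of A satisfies μ(A) ≪ y X^{8/3 + ε} Z₁^{−2} Z₂^{−2}. -/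

import Mathlib

open Real MeasureTheory

/-!
Write `θ = l₁ / l₂`. Eliminating `α` from the two approximations leaves an integer `r = a₂ q₁` for
which `r θ` is within `1 / (4 q)` of the integer `a₁ q₂`. Since `q` is the denominator of a
convergent of `θ`, such an `r` has `|r| > q / 2`, and distinct ones differ by more than `q / 2`.
Each `r` determines `a₁ q₂`, hence comes from at most `d(r) d(a₁ q₂)` quadruples. A quadruple
confines `α` to an interval of length at most the geometric mean of `2 δᵢ / (qᵢ |lᵢ|)`, and
`|r| ≪ y q₁ q₂` turns this into `≪ √(y δ₁ δ₂ / |r|)`; summing `1 / √|r|` over a spaced set gains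
the factor `1 / q`.

The divisor bound costs only `X ^ ε` while `y` is at most `q`. For larger `y`, the set is cut into
windows of length `q`, and translating a window to the origin doubles the tolerances and may
produce quadruples with zero numerators.
-/

section DivisorBound

variable {ε : ℝ}

lemma natCast_add_one_le_mul_pow_rpow (hε : 0 < ε) {x : ℝ} (hx : 2 ≤ x) (a : ℕ) :
    (a : ℝ) + 1 ≤ (1 + 1 / (ε * log 2)) * (x ^ a) ^ ε := by
  have : 0 < log 2 := log_pos one_lt_two
  have bernoulli : 1 + a * (ε * log 2) ≤ (x ^ a) ^ ε := calc
    1 + a * (ε * log 2) ≤ exp (a * (ε * log 2)) := by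
      rw [add_comm]; exact add_one_le_exp _
    _ = ((2 : ℝ) ^ a) ^ ε := by
      rw [rpow_def_of_pos (by positivity), log_pow]; ring_nf
    _ ≤ (x ^ a) ^ ε := by gcongr
  calc (a : ℝ) + 1 ≤ a + 1 + (a * (ε * log 2) + 1 / (ε * log 2)) :=
        le_add_of_nonneg_right (by positivity)
    _ = (1 + 1 / (ε * log 2)) * (1 + a * (ε * log 2)) := by field_simp; ring
    _ ≤ _ := by gcongr

lemma natCast_add_one_le_pow_rpow {x : ℝ} (hx₀ : 0 ≤ x) (hx : 2 ≤ x ^ ε) (a : ℕ) :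
    (a : ℝ) + 1 ≤ (x ^ a) ^ ε := calc
  (a : ℝ) + 1 ≤ 2 ^ a := by exact_mod_cast Nat.lt_two_pow_self
  _ ≤ (x ^ ε) ^ a := by gcongr
  _ = (x ^ a) ^ ε := by
    rw [← rpow_natCast, ← rpow_natCast, ← rpow_mul hx₀, ← rpow_mul hx₀, mul_comm]

lemma natCast_rpow_eq_prod_primeFactors {n : ℕ} (hn : n ≠ 0) (ε : ℝ) :
    (n : ℝ) ^ ε = ∏ p ∈ n.primeFactors, ((p : ℝ) ^ n.factorization p) ^ ε := by
  rw [finsetProd_rpow _ _ fun p _ => by positivity]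
  conv_lhs => rw [← Nat.prod_factorization_pow_eq_self hn]
  simp [Finsupp.prod]

-- Only the primes below `2 ^ (1 / ε)` can contribute a factor larger than `(p ^ a) ^ ε`.
theorem exists_card_divisors_le_mul_rpow (hε : 0 < ε) :
    ∃ C : ℝ, 1 ≤ C ∧ ∀ n : ℕ, (n.divisors.card : ℝ) ≤ C * (n : ℝ) ^ ε := by
  obtain ⟨B, hB⟩ := exists_nat_ge ((2 : ℝ) ^ (1 / ε))
  set K : ℝ := 1 + 1 / (ε * log 2)
  have hK : 1 ≤ K := le_add_of_nonneg_right (by have := log_pos one_lt_two; positivity)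
  refine ⟨K ^ B, one_le_pow₀ hK, fun n => ?_⟩
  rcases eq_or_ne n 0 with rfl | hn
  · simp [zero_rpow hε.ne']
  have factor_le : ∀ p ∈ n.primeFactors, (n.factorization p : ℝ) + 1 ≤
      (if p < B then K else 1) * ((p : ℝ) ^ n.factorization p) ^ ε := by
    intro p hp
    split_ifs with hpB
    · exact natCast_add_one_le_mul_pow_rpow hε
        (by exact_mod_cast (Nat.prime_of_mem_primeFactors hp).two_le) _
    · rw [one_mul]
      refine natCast_add_one_le_pow_rpow p.cast_nonneg ?_ _
      rw [← rpow_inv_le_iff_of_pos zero_le_two p.cast_nonneg hε, ← one_div]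
      exact hB.trans (by exact_mod_cast not_lt.mp hpB)
  have small_primes : ∏ p ∈ n.primeFactors, (if p < B then K else 1) ≤ K ^ B := by
    rw [Finset.prod_ite, Finset.prod_const, Finset.prod_const_one, mul_one]
    refine pow_le_pow_right₀ hK ((Finset.card_le_card (t := Finset.range B) fun p hp => ?_).trans
      (Finset.card_range B).le)
    exact Finset.mem_range.2 (Finset.mem_filter.1 hp).2
  rw [Nat.card_divisors hn, natCast_rpow_eq_prod_primeFactors hn]
  push_cast
  calc ∏ p ∈ n.primeFactors, ((n.factorization p : ℝ) + 1) ≤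
        ∏ p ∈ n.primeFactors,
          (if p < B then K else 1) * ((p : ℝ) ^ n.factorization p) ^ ε :=
        Finset.prod_le_prod (fun _ _ => by positivity) factor_le
    _ ≤ _ := by
        rw [Finset.prod_mul_distrib]
        gcongr

end DivisorBound

section DirichletDenominators

/-- `q` is the denominator of a reduced fraction `p / q` with `|θ - p / q| ≤ 1 / q ^ 2`, the only
property of the denominators of convergents that the argument needs. -/
structure IsDirichletDenom (θ : ℝ) (q : ℕ) : Prop where
  pos : 0 < q
  exists_num : ∃ p : ℤ, IsCoprime (q : ℤ) p ∧ |θ - p / q| ≤ 1 / (q : ℝ) ^ 2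

lemma exists_int_contsAux_eq {K : Type*} [Field K] [LinearOrder K] [IsStrictOrderedRing K]
    [FloorRing K] (v : K) (n : ℕ) :
    ∃ a b : ℤ, (GenContFract.of v).contsAux n = ⟨a, b⟩ := by
  induction n using Nat.twoStepInduction with
  | zero => exact ⟨1, 0, by simp [GenContFract.contsAux]⟩
  | one => exact ⟨⌊v⌋, 1, by simp [GenContFract.contsAux, GenContFract.of_h_eq_floor]⟩
  | more n ih₀ ih₁ =>
    obtain ⟨a, b, hab⟩ := ih₀
    obtain ⟨c, d, hcd⟩ := ih₁
    rcases hs : (GenContFract.of v).s.get? n with _ | gp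
    · exact ⟨c, d, by rw [← hcd]; exact GenContFract.contsAux_stable_step_of_terminated hs⟩
    · obtain ⟨ha, z, hb⟩ := GenContFract.of_partNum_eq_one_and_exists_int_partDen_eq hs
      refine ⟨z * c + a, z * d + b, ?_⟩
      rw [GenContFract.contsAux_recurrence hs hab hcd, ha, hb]
      push_cast
      simp only [one_mul]

lemma exists_int_nums_eq_and_dens_eq {K : Type*} [Field K] [LinearOrder K]
    [IsStrictOrderedRing K] [FloorRing K] (v : K) (n : ℕ) :
    ∃ a b : ℤ, (GenContFract.of v).nums n = a ∧ (GenContFract.of v).dens n = b := by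
  obtain ⟨a, b, hab⟩ := exists_int_contsAux_eq v (n + 1)
  refine ⟨a, b, ?_, ?_⟩
  · rw [GenContFract.num_eq_conts_a, GenContFract.nth_cont_eq_succ_nth_contAux, hab]
  · rw [GenContFract.den_eq_conts_b, GenContFract.nth_cont_eq_succ_nth_contAux, hab]

theorem isDirichletDenom_of_irrational {θ : ℝ} (hθ : Irrational θ) {q m : ℕ} (hq : 0 < q)
    (hqm : (q : ℝ) = (GenContFract.of θ).dens m) : IsDirichletDenom θ q := by
  have hT : ¬ (GenContFract.of θ).TerminatedAt m := fun h =>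
    have ⟨x, hx⟩ := (GenContFract.terminates_iff_rat θ).1 ⟨m, h⟩
    hθ ⟨x, hx.symm⟩
  obtain ⟨p, -, hp, -⟩ := exists_int_nums_eq_and_dens_eq θ m
  obtain ⟨p', q', hp', hq'⟩ := exists_int_nums_eq_and_dens_eq θ (m + 1)
  refine ⟨hq, p, ?_, ?_⟩
  · have det : (GenContFract.of θ).nums m * (GenContFract.of θ).dens (m + 1) -
        (GenContFract.of θ).dens m * (GenContFract.of θ).nums (m + 1) = (-1) ^ (m + 1) :=
      SimpContFract.determinant (s := SimpContFract.of θ) hT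
    rw [hp, hp', hq', ← hqm] at det
    have det_int : p * q' - q * p' = (-1) ^ (m + 1) := by exact_mod_cast det
    rcases neg_one_pow_eq_or ℤ (m + 1) with h | h <;> rw [h] at det_int
    · exact ⟨-p', q', by linarith⟩
    · exact ⟨p', -q', by linarith⟩
  · have happrox := GenContFract.abs_sub_convs_le hT
    rw [GenContFract.conv_eq_num_div_den, hp, ← hqm] at happrox
    have hmono : (q : ℝ) ≤ (GenContFract.of θ).dens (m + 1) := hqm ▸ GenContFract.of_den_mono
    refine happrox.trans ?_
    rw [sq]
    gcongr

/-- A weak form of Legendre's best-approximation law. -/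
theorem IsDirichletDenom.half_lt_abs {θ : ℝ} {q : ℕ} (h : IsDirichletDenom θ q) {n k : ℤ}
    (hn : n ≠ 0) (hnk : |n * θ - k| < 1 / (2 * q)) : (q : ℝ) / 2 < |(n : ℝ)| := by
  obtain ⟨hq, p, hcop, hp⟩ := h
  have hq' : (0 : ℝ) < q := by exact_mod_cast hq
  by_contra! hsmall
  have hne : n * p - k * q ≠ 0 := by
    intro h0
    have hdvd : (q : ℤ) ∣ n := hcop.dvd_of_dvd_mul_right ⟨k, by linarith⟩
    have hle : (q : ℝ) ≤ |(n : ℝ)| := by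
      exact_mod_cast Int.le_of_dvd (abs_pos.2 hn) ((dvd_abs _ _).2 hdvd)
    linarith
  have hone : (1 : ℝ) ≤ |(n : ℝ) * p - k * q| := by exact_mod_cast Int.one_le_abs hne
  have hsplit : (n : ℝ) * p - k * q = q * (n * θ - k) - n * q * (θ - p / q) := by
    field_simp; ring
  have hfst : |q * (n * θ - k)| < 1 / 2 := by
    rw [abs_mul, abs_of_pos hq']
    calc (q : ℝ) * |n * θ - k| < q * (1 / (2 * q)) := by gcongr
      _ = 1 / 2 := by field_simp
  have hsnd : |n * q * (θ - p / q)| ≤ 1 / 2 := by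
    rw [abs_mul, abs_mul, abs_of_pos hq']
    calc |(n : ℝ)| * q * |θ - p / q| ≤ q / 2 * q * (1 / (q : ℝ) ^ 2) := by gcongr
      _ = 1 / 2 := by field_simp
  rw [hsplit] at hone
  linarith [abs_sub (q * (n * θ - k)) (n * q * (θ - p / q))]

end DirichletDenominators

section SpacedSums

variable {ι : Type*} {f : ι → ℝ} {S : Finset ι} {d M : ℝ}

lemma one_div_sqrt_le_sub (hd : 0 < d) {a : ℝ} (hda : d ≤ a) :
    1 / √a ≤ 2 * √a / d - 2 * √(a - d) / d := by
  have ha : 0 < √a := sqrt_pos.2 (hd.trans_le hda)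
  have hsq : √a ^ 2 = a := sq_sqrt (hd.le.trans hda)
  have hsq' : √(a - d) ^ 2 = a - d := sq_sqrt (sub_nonneg.2 hda)
  rw [← sub_div, div_le_div_iff₀ ha hd]
  nlinarith [sq_nonneg (√a - √(a - d))]

lemma sum_one_div_sqrt_le_of_pairwise (hd : 0 < d) (hlow : ∀ i ∈ S, d ≤ f i)
    (hM : ∀ i ∈ S, f i ≤ M) (hsep : (S : Set ι).Pairwise fun i j => d ≤ |f i - f j|) :
    ∑ i ∈ S, 1 / √(f i) ≤ 2 * √M / d := by
  classical
  induction S using Finset.induction_on_max_value f generalizing M with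
  | empty => simp only [Finset.sum_empty]; positivity
  | insert a s has hmax ih =>
    have below : ∀ i ∈ s, f i ≤ f a - d := fun i hi => by
      have hne : a ≠ i := fun h => has (h ▸ hi)
      have gap : d ≤ |f a - f i| := hsep (by simp) (by simp [hi]) hne
      rw [abs_of_nonneg (sub_nonneg.2 (hmax i hi))] at gap
      linarith
    have hs := ih (fun i hi => hlow i (Finset.mem_insert_of_mem hi)) below
      (hsep.mono (by simp))
    rw [Finset.sum_insert has]
    calc 1 / √(f a) + ∑ i ∈ s, 1 / √(f i)
        ≤ (2 * √(f a) / d - 2 * √(f a - d) / d) + 2 * √(f a - d) / d :=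
          add_le_add (one_div_sqrt_le_sub hd (hlow a (by simp))) hs
      _ = 2 * √(f a) / d := by ring
      _ ≤ 2 * √M / d := by gcongr; exact hM a (by simp)

lemma sum_one_div_sqrt_abs_le_of_pairwise (hd : 0 < d) (hlow : ∀ i ∈ S, d ≤ |f i|)
    (hM : ∀ i ∈ S, |f i| ≤ M) (hsep : (S : Set ι).Pairwise fun i j => d ≤ |f i - f j|) :
    ∑ i ∈ S, 1 / √|f i| ≤ 4 * √M / d := by
  classical
  have half (g : ι → ℝ) (P : Finset ι) (hPS : P ⊆ S) (hg : ∀ i ∈ P, |f i| = g i)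
      (hgsep : ∀ i j, |g i - g j| = |f i - f j|) :
      ∑ i ∈ P, 1 / √|f i| ≤ 2 * √M / d := by
    rw [Finset.sum_congr rfl fun i hi => by rw [hg i hi]]
    exact sum_one_div_sqrt_le_of_pairwise hd (fun i hi => hg i hi ▸ hlow i (hPS hi))
      (fun i hi => hg i hi ▸ hM i (hPS hi))
      fun i hi j hj hij => (hsep (hPS hi) (hPS hj) hij).trans (hgsep i j).ge
  have pos := half f (S.filter (0 < f ·)) (Finset.filter_subset _ _)
    (fun i hi => abs_of_pos (Finset.mem_filter.1 hi).2) fun _ _ => rfl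
  have neg := half (-f ·) (S.filter (¬ 0 < f ·)) (Finset.filter_subset _ _)
    (fun i hi => abs_of_nonpos (not_lt.1 (Finset.mem_filter.1 hi).2))
    fun i j => by rw [neg_sub_neg, abs_sub_comm]
  rw [← Finset.sum_filter_add_sum_filter_not S (0 < f ·)]
  linarith [show 4 * √M / d = 2 * √M / d + 2 * √M / d by ring]

lemma sum_natCast_one_div_sqrt_le {S : Finset ℕ} (hpos : ∀ n ∈ S, 0 < n)
    (hM : ∀ n ∈ S, (n : ℝ) ≤ M) : ∑ n ∈ S, 1 / √(n : ℝ) ≤ 2 * √M := by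
  simpa only [div_one] using sum_one_div_sqrt_le_of_pairwise (f := ((↑) : ℕ → ℝ)) one_pos
    (fun n hn => by exact_mod_cast hpos n hn) hM fun m _ n _ hmn => by
      exact_mod_cast Int.one_le_abs (sub_ne_zero.2 (Nat.cast_injective.ne hmn : (m : ℤ) ≠ n))

lemma sum_natCast_prod_one_div_sqrt_le {P : Finset (ℕ × ℕ)} {M₁ M₂ : ℝ}
    (hP : ∀ p ∈ P, 0 < p.1 ∧ 0 < p.2 ∧ (p.1 : ℝ) ≤ M₁ ∧ (p.2 : ℝ) ≤ M₂) :
    ∑ p ∈ P, 1 / √(p.1 * p.2 : ℝ) ≤ 4 * √(M₁ * M₂) := by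
  rcases P.eq_empty_or_nonempty with rfl | ⟨p, hp⟩
  · simp
  have hM₁ : 0 ≤ M₁ := (Nat.cast_nonneg _).trans (hP p hp).2.2.1
  have split (p : ℕ × ℕ) : 1 / √(p.1 * p.2 : ℝ) = 1 / √(p.1 : ℝ) * (1 / √(p.2 : ℝ)) := by
    rw [sqrt_mul (Nat.cast_nonneg _), one_div_mul_one_div]
  calc ∑ p ∈ P, 1 / √(p.1 * p.2 : ℝ)
      ≤ ∑ p ∈ P.image Prod.fst ×ˢ P.image Prod.snd, 1 / √(p.1 * p.2 : ℝ) :=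
        Finset.sum_le_sum_of_subset_of_nonneg Finset.subset_product fun _ _ _ => by positivity
    _ = (∑ m ∈ P.image Prod.fst, 1 / √(m : ℝ)) * ∑ n ∈ P.image Prod.snd, 1 / √(n : ℝ) := by
        simp only [split]
        rw [Finset.sum_product, Finset.sum_mul_sum]
    _ ≤ 2 * √M₁ * (2 * √M₂) := by
        gcongr
        · exact sum_natCast_one_div_sqrt_le (Finset.forall_mem_image.2 fun p hp => (hP p hp).1)
            (Finset.forall_mem_image.2 fun p hp => (hP p hp).2.2.1)
        · exact sum_natCast_one_div_sqrt_le (Finset.forall_mem_image.2 fun p hp => (hP p hp).2.1)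
            (Finset.forall_mem_image.2 fun p hp => (hP p hp).2.2.2)
    _ = 4 * √(M₁ * M₂) := by rw [sqrt_mul hM₁]; ring

end SpacedSums

section ApproximationLemmas

lemma volume_setOf_abs_mul_sub_le {w : ℝ} (hw : w ≠ 0) (x δ : ℝ) :
    volume {α : ℝ | |w * α - x| ≤ δ} = ENNReal.ofReal (2 * (δ / |w|)) := by
  rw [← Real.volume_closedBall (x / w)]
  congr 1
  ext α
  rw [Set.mem_ofPred_eq, Metric.mem_closedBall, dist_eq, le_div_iff₀' (abs_pos.2 hw), ← abs_mul,
    mul_sub, mul_div_cancel₀ x hw]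

lemma min_le_sqrt_mul {u v : ℝ} (hu : 0 ≤ u) (hv : 0 ≤ v) : min u v ≤ √(u * v) := by
  rw [le_sqrt (le_min hu hv) (mul_nonneg hu hv), sq]
  exact mul_le_mul (min_le_left u v) (min_le_right u v) (le_min hu hv) hu

lemma abs_intCast_le_two_mul_abs {x δ : ℝ} {a : ℤ} (hδ : δ ≤ 1 / 2) (h : |x - a| ≤ δ) :
    |(a : ℝ)| ≤ 2 * |x| := by
  rcases eq_or_ne a 0 with rfl | ha
  · simp
  have : (1 : ℝ) ≤ |(a : ℝ)| := by exact_mod_cast Int.one_le_abs ha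
  linarith [abs_sub_abs_le_abs_sub (a : ℝ) x, abs_sub_comm (a : ℝ) x]

end ApproximationLemmas

section FractionPairs

/-- A pair of fractions `a₁ / q₁`, `a₂ / q₂`, recorded by numerators and denominators. It stands for
a simultaneous approximation to `l₁ * α` and `l₂ * α`. -/
@[ext]
structure FractionPair where
  q₁ : ℕ
  q₂ : ℕ
  a₁ : ℤ
  a₂ : ℤ

namespace FractionPair

variable {l₁ l₂ δ₁ δ₂ N₁ N₂ H α β : ℝ} {t : FractionPair}

instance : Countable FractionPair :=
  Function.Injective.countable (f := fun t : FractionPair => (t.q₁, t.q₂, t.a₁, t.a₂))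
    fun s t h => by simpa [FractionPair.ext_iff] using h

/-- The cross product `a₂ q₁`, the integer `r` over which the measure estimate is summed. -/
def cross₁ (t : FractionPair) : ℤ := t.a₂ * t.q₁

/-- The cross product `a₁ q₂`, the integer nearest to `a₂ q₁ l₁ / l₂`. -/
def cross₂ (t : FractionPair) : ℤ := t.a₁ * t.q₂

/-- The set of `α` for which `q₁ l₁ α` is within `δ₁` of `a₁` and `q₂ l₂ α` is within `δ₂` of
`a₂`. -/
def approxSet (l₁ l₂ δ₁ δ₂ : ℝ) (t : FractionPair) : Set ℝ :=
  {α | |t.q₁ * l₁ * α - t.a₁| ≤ δ₁ ∧ |t.q₂ * l₂ * α - t.a₂| ≤ δ₂}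

/-- The denominators of `t` are positive, and bounded by `N₁` and `N₂` respectively. -/
structure InBox (N₁ N₂ : ℝ) (t : FractionPair) : Prop where
  q₁_pos : 0 < t.q₁
  q₂_pos : 0 < t.q₂
  q₁_le : (t.q₁ : ℝ) ≤ N₁
  q₂_le : (t.q₂ : ℝ) ≤ N₂

lemma approxSet_mono {δ₁' δ₂' : ℝ} (h₁ : δ₁ ≤ δ₁') (h₂ : δ₂ ≤ δ₂') :
    approxSet l₁ l₂ δ₁ δ₂ t ⊆ approxSet l₁ l₂ δ₁' δ₂' t :=
  fun _ hα => ⟨hα.1.trans h₁, hα.2.trans h₂⟩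

lemma sub_mem_approxSet_sub {q₁ q₂ : ℕ} {a₁ a₂ b₁ b₂ : ℤ}
    (hα : α ∈ approxSet l₁ l₂ δ₁ δ₂ ⟨q₁, q₂, a₁, a₂⟩)
    (hβ : β ∈ approxSet l₁ l₂ δ₁ δ₂ ⟨q₁, q₂, b₁, b₂⟩) :
    α - β ∈ approxSet l₁ l₂ (2 * δ₁) (2 * δ₂) ⟨q₁, q₂, a₁ - b₁, a₂ - b₂⟩ := by
  have sub_le {w a b δ : ℝ} (ha : |w * α - a| ≤ δ) (hb : |w * β - b| ≤ δ) :
      |w * (α - β) - (a - b)| ≤ 2 * δ := by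
    rw [show w * (α - β) - (a - b) = (w * α - a) - (w * β - b) by ring, two_mul]
    exact (abs_sub _ _).trans (add_le_add ha hb)
  exact ⟨by simpa using sub_le hα.1 hβ.1, by simpa using sub_le hα.2 hβ.2⟩

lemma card_le_card_divisors_mul_card_divisors {T : Finset FractionPair} {r s : ℤ} (hr : r ≠ 0)
    (hs : s ≠ 0) (hT : ∀ t ∈ T, t.cross₁ = r ∧ t.cross₂ = s) :
    T.card ≤ r.natAbs.divisors.card * s.natAbs.divisors.card := by
  rw [← Finset.card_product]
  refine Finset.card_le_card_of_injOn (fun t => (t.q₁, t.q₂)) (fun t ht => ?_)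
    fun t ht u hu htu => ?_
  · obtain ⟨rfl, rfl⟩ := hT t ht
    simp only [Finset.coe_product, Set.mem_prod, Finset.mem_coe, Nat.mem_divisors, ne_eq,
      Int.natAbs_eq_zero]
    exact ⟨⟨Int.natCast_dvd.1 (dvd_mul_left _ _), hr⟩, ⟨Int.natCast_dvd.1 (dvd_mul_left _ _), hs⟩⟩
  · obtain ⟨hrt, hst⟩ := hT t ht
    obtain ⟨hru, hsu⟩ := hT u hu
    obtain ⟨h₁, h₂⟩ := Prod.mk.inj htu
    have hq₁ : (t.q₁ : ℤ) ≠ 0 := right_ne_zero_of_mul (hrt.trans_ne hr : t.a₂ * (t.q₁ : ℤ) ≠ 0)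
    have hq₂ : (t.q₂ : ℤ) ≠ 0 := right_ne_zero_of_mul (hst.trans_ne hs : t.a₁ * (t.q₂ : ℤ) ≠ 0)
    refine FractionPair.ext h₁ h₂ (mul_right_cancel₀ hq₂ ?_) (mul_right_cancel₀ hq₁ ?_)
    · exact hst.trans (h₂ ▸ hsu.symm)
    · exact hrt.trans (h₁ ▸ hru.symm)

lemma volume_approxSet_le (hl₁ : l₁ ≠ 0) (hl₂ : l₂ ≠ 0) (hδ₁ : 0 ≤ δ₁) (hδ₂ : 0 ≤ δ₂)
    (ht : t.InBox N₁ N₂) :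
    volume (t.approxSet l₁ l₂ δ₁ δ₂) ≤
      ENNReal.ofReal (2 * √(δ₁ * δ₂ / (|l₁| * |l₂| * (t.q₁ * t.q₂)))) := by
  have hw₁ : t.q₁ * l₁ ≠ 0 := mul_ne_zero (by exact_mod_cast ht.q₁_pos.ne') hl₁
  have hw₂ : t.q₂ * l₂ ≠ 0 := mul_ne_zero (by exact_mod_cast ht.q₂_pos.ne') hl₂
  have h₁ : volume (t.approxSet l₁ l₂ δ₁ δ₂) ≤ ENNReal.ofReal (2 * (δ₁ / |t.q₁ * l₁|)) :=
    (measure_mono fun _ h => h.1).trans (volume_setOf_abs_mul_sub_le hw₁ t.a₁ δ₁).le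
  have h₂ : volume (t.approxSet l₁ l₂ δ₁ δ₂) ≤ ENNReal.ofReal (2 * (δ₂ / |t.q₂ * l₂|)) :=
    (measure_mono fun _ h => h.2).trans (volume_setOf_abs_mul_sub_le hw₂ t.a₂ δ₂).le
  refine (le_min h₁ h₂).trans ?_
  rw [← ENNReal.ofReal_min, ← mul_min_of_nonneg _ _ zero_le_two]
  gcongr
  refine (min_le_sqrt_mul (by positivity) (by positivity)).trans_eq ?_
  rw [abs_mul, abs_mul, Nat.abs_cast, Nat.abs_cast, div_mul_div_comm]
  ring_nf

lemma abs_cross₁_le (hδ₂ : δ₂ ≤ 1 / 2) (h : α ∈ t.approxSet l₁ l₂ δ₁ δ₂) (hα : |α| ≤ H) :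
    |(t.cross₁ : ℝ)| ≤ 2 * |l₂| * (t.q₁ * t.q₂) * H := by
  have ha := abs_intCast_le_two_mul_abs hδ₂ h.2
  rw [abs_mul, abs_mul, Nat.abs_cast] at ha
  calc |(t.cross₁ : ℝ)| = |(t.a₂ : ℝ)| * t.q₁ := by simp [cross₁, abs_mul]
    _ ≤ 2 * (t.q₂ * |l₂| * H) * t.q₁ := by gcongr; exact ha.trans (by gcongr)
    _ = _ := by ring

lemma abs_cross₂_le (hδ₁ : δ₁ ≤ 1 / 2) (h : α ∈ t.approxSet l₁ l₂ δ₁ δ₂) (hα : |α| ≤ H) :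
    |(t.cross₂ : ℝ)| ≤ 2 * |l₁| * (t.q₁ * t.q₂) * H := by
  have ha := abs_intCast_le_two_mul_abs hδ₁ h.1
  rw [abs_mul, abs_mul, Nat.abs_cast] at ha
  calc |(t.cross₂ : ℝ)| = |(t.a₁ : ℝ)| * t.q₂ := by simp [cross₂, abs_mul]
    _ ≤ 2 * (t.q₁ * |l₁| * H) * t.q₂ := by gcongr; exact ha.trans (by gcongr)
    _ = _ := by ring

-- `a₂ q₁ l₁ / l₂ - a₁ q₂` is `q₂ (q₁ l₁ α - a₁) - q₁ (l₁ / l₂) (q₂ l₂ α - a₂)`, free of `α`.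
lemma abs_cross₁_mul_sub_cross₂_le (hl₂ : l₂ ≠ 0) (h : α ∈ t.approxSet l₁ l₂ δ₁ δ₂) :
    |t.cross₁ * (l₁ / l₂) - t.cross₂| ≤ δ₁ * t.q₂ + δ₂ * t.q₁ * |l₁ / l₂| := by
  have eliminate : t.cross₁ * (l₁ / l₂) - t.cross₂ =
      (t.q₁ * l₁ * α - t.a₁) * t.q₂ - (t.q₂ * l₂ * α - t.a₂) * t.q₁ * (l₁ / l₂) := by
    simp only [cross₁, cross₂]; push_cast; field_simp; ring
  rw [eliminate]
  refine (abs_sub _ _).trans ?_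
  rw [abs_mul, abs_mul, abs_mul, Nat.abs_cast, Nat.abs_cast]
  gcongr
  exacts [h.1, h.2]

end FractionPair

end FractionPairs

section CrossProducts

variable {θ l₁ l₂ δ₁ δ₂ N₁ N₂ H K M : ℝ} {q : ℕ} {T : Finset FractionPair}

lemma IsDirichletDenom.half_lt_abs_cross₁_sub (hq : IsDirichletDenom θ q) {t u : FractionPair}
    (ht : |t.cross₁ * θ - t.cross₂| < 1 / (4 * q)) (hu : |u.cross₁ * θ - u.cross₂| < 1 / (4 * q))
    (hne : t.cross₁ ≠ u.cross₁) : (q : ℝ) / 2 < |(t.cross₁ : ℝ) - u.cross₁| := by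
  have near : |((t.cross₁ - u.cross₁ : ℤ) : ℝ) * θ - (t.cross₂ - u.cross₂ : ℤ)| < 1 / (2 * q) := by
    push_cast
    calc |((t.cross₁ : ℝ) - u.cross₁) * θ - (t.cross₂ - u.cross₂)|
        = |(t.cross₁ * θ - t.cross₂) - (u.cross₁ * θ - u.cross₂)| := by ring_nf
      _ ≤ _ := abs_sub _ _
      _ < 1 / (4 * q) + 1 / (4 * q) := add_lt_add ht hu
      _ = 1 / (2 * q) := by ring
  exact_mod_cast hq.half_lt_abs (sub_ne_zero.2 hne) near

lemma IsDirichletDenom.cross₂_eq (hq : IsDirichletDenom θ q) {t u : FractionPair}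
    (ht : |t.cross₁ * θ - t.cross₂| < 1 / (4 * q)) (hu : |u.cross₁ * θ - u.cross₂| < 1 / (4 * q))
    (h : t.cross₁ = u.cross₁) : t.cross₂ = u.cross₂ := by
  have hq₁ : (1 : ℝ) ≤ q := by exact_mod_cast hq.pos
  have hquarter : 1 / (4 * (q : ℝ)) ≤ 1 / 4 := by gcongr; linarith
  have : |((t.cross₂ - u.cross₂ : ℤ) : ℝ)| < 1 := by
    rw [h] at ht
    push_cast
    rw [abs_lt] at *
    constructor <;> linarith
  exact sub_eq_zero.1 (Int.abs_lt_one_iff.1 (by exact_mod_cast this))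

theorem IsDirichletDenom.sum_one_div_sqrt_abs_cross₁_le (hq : IsDirichletDenom θ q)
    (hnear : ∀ t ∈ T, |t.cross₁ * θ - t.cross₂| < 1 / (4 * q))
    (h₁ : ∀ t ∈ T, t.cross₁ ≠ 0) (h₂ : ∀ t ∈ T, t.cross₂ ≠ 0)
    (hK₁ : ∀ t ∈ T, (t.cross₁.natAbs.divisors.card : ℝ) ≤ K)
    (hK₂ : ∀ t ∈ T, (t.cross₂.natAbs.divisors.card : ℝ) ≤ K)
    (hM : ∀ t ∈ T, |(t.cross₁ : ℝ)| ≤ M) :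
    ∑ t ∈ T, 1 / √|(t.cross₁ : ℝ)| ≤ K ^ 2 * (8 * √M / q) := by
  classical
  have hq₀ : (0 : ℝ) < q := by exact_mod_cast hq.pos
  have fiber_card : ∀ t ∈ T, ({u ∈ T | u.cross₁ = t.cross₁}.card : ℝ) ≤ K ^ 2 := fun t ht => by
    have hcard := FractionPair.card_le_card_divisors_mul_card_divisors (h₁ t ht) (h₂ t ht)
      (T := {u ∈ T | u.cross₁ = t.cross₁}) fun u hu =>
        have ⟨huT, h⟩ := Finset.mem_filter.1 hu
        ⟨h, hq.cross₂_eq (hnear u huT) (hnear t ht) h⟩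
    calc ({u ∈ T | u.cross₁ = t.cross₁}.card : ℝ)
        ≤ t.cross₁.natAbs.divisors.card * t.cross₂.natAbs.divisors.card := by exact_mod_cast hcard
      _ ≤ K * K := by gcongr; exacts [(Nat.cast_nonneg _).trans (hK₁ t ht), hK₁ t ht, hK₂ t ht]
      _ = K ^ 2 := (sq K).symm
  have spaced : ∑ r ∈ T.image FractionPair.cross₁, 1 / √|(r : ℝ)| ≤ 4 * √M / (q / 2) := by
    refine sum_one_div_sqrt_abs_le_of_pairwise (by positivity) ?_ ?_ ?_
    · simp only [Finset.forall_mem_image]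
      intro t ht
      have hlt : |t.cross₁ * θ - t.cross₂| < 1 / (2 * q) :=
        (hnear t ht).trans_le (by gcongr; norm_num)
      exact (hq.half_lt_abs (h₁ t ht) hlt).le
    · simpa only [Finset.forall_mem_image] using hM
    · simp only [Set.Pairwise, Finset.mem_coe, Finset.forall_mem_image]
      exact fun t ht u hu hne => (hq.half_lt_abs_cross₁_sub (hnear t ht) (hnear u hu) hne).le
  calc ∑ t ∈ T, 1 / √|(t.cross₁ : ℝ)|
      = ∑ r ∈ T.image FractionPair.cross₁, {u ∈ T | u.cross₁ = r}.card • (1 / √|(r : ℝ)|) :=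
        Finset.sum_comp (fun r : ℤ => 1 / √|(r : ℝ)|) FractionPair.cross₁
    _ ≤ ∑ r ∈ T.image FractionPair.cross₁, K ^ 2 * (1 / √|(r : ℝ)|) := by
        refine Finset.sum_le_sum (Finset.forall_mem_image.2 fun t ht => ?_)
        rw [nsmul_eq_mul]
        gcongr
        exact fiber_card t ht
    _ ≤ K ^ 2 * (4 * √M / (q / 2)) := by rw [← Finset.mul_sum]; gcongr
    _ = K ^ 2 * (8 * √M / q) := by ring

theorem FractionPair.sum_volume_approxSet_le_of_num_eq_zero (hl₁ : l₁ ≠ 0) (hl₂ : l₂ ≠ 0)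
    (hδ₁ : 0 ≤ δ₁) (hδ₂ : 0 ≤ δ₂) (hT : ∀ t ∈ T, t.InBox N₁ N₂)
    (hzero : ∀ t ∈ T, t.a₁ = 0 ∧ t.a₂ = 0) :
    ∑ t ∈ T, volume (t.approxSet l₁ l₂ δ₁ δ₂) ≤
      ENNReal.ofReal (8 / √(|l₁| * |l₂|) * √(δ₁ * δ₂ * (N₁ * N₂))) := by
  classical
  have inj : Set.InjOn (fun t : FractionPair => (t.q₁, t.q₂)) T := fun t ht u hu h => by
    obtain ⟨h₁, h₂⟩ := Prod.mk.inj h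
    exact FractionPair.ext h₁ h₂ ((hzero t ht).1.trans (hzero u hu).1.symm)
      ((hzero t ht).2.trans (hzero u hu).2.symm)
  have sum_le : ∑ t ∈ T, 1 / √(t.q₁ * t.q₂ : ℝ) ≤ 4 * √(N₁ * N₂) := by
    rw [← Finset.sum_image (f := fun p : ℕ × ℕ => 1 / √(p.1 * p.2 : ℝ)) inj]
    exact sum_natCast_prod_one_div_sqrt_le (Finset.forall_mem_image.2 fun t ht =>
      ⟨(hT t ht).q₁_pos, (hT t ht).q₂_pos, (hT t ht).q₁_le, (hT t ht).q₂_le⟩)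
  calc ∑ t ∈ T, volume (t.approxSet l₁ l₂ δ₁ δ₂)
      ≤ ∑ t ∈ T, ENNReal.ofReal (2 * √(δ₁ * δ₂ / (|l₁| * |l₂|)) * (1 / √(t.q₁ * t.q₂ : ℝ))) :=
        Finset.sum_le_sum fun t ht => by
          refine (volume_approxSet_le hl₁ hl₂ hδ₁ hδ₂ (hT t ht)).trans_eq ?_
          rw [← div_div, sqrt_div (by positivity)]
          ring_nf
    _ = ENNReal.ofReal (2 * √(δ₁ * δ₂ / (|l₁| * |l₂|)) * ∑ t ∈ T, 1 / √(t.q₁ * t.q₂ : ℝ)) := by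
        rw [Finset.mul_sum, ENNReal.ofReal_sum_of_nonneg fun _ _ => by positivity]
    _ ≤ ENNReal.ofReal (2 * √(δ₁ * δ₂ / (|l₁| * |l₂|)) * (4 * √(N₁ * N₂))) := by gcongr
    _ = _ := by
        rw [sqrt_div (by positivity), sqrt_mul (by positivity) (N₁ * N₂)]
        ring_nf

/-- The tolerances `δ₁`, `δ₂` are so small, relative to the bounds `N₁`, `N₂` on the denominators,
that every nonzero fraction pair within tolerance has nonzero cross products, with `cross₁ * θ`
within `1 / (4 * q)` of `cross₂`. Here `θ` stands for `l₁ / l₂`, and it is nonzero by `one_le`. -/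
structure IsResolved (θ δ₁ δ₂ N₁ N₂ : ℝ) (q : ℕ) : Prop where
  denom : IsDirichletDenom θ q
  δ₁_nonneg : 0 ≤ δ₁
  δ₂_nonneg : 0 ≤ δ₂
  δ₁_le : δ₁ ≤ 1 / 2
  δ₂_le : δ₂ ≤ 1 / 2
  one_le : 1 ≤ 4 * q * |θ|
  lt : δ₁ * N₂ + δ₂ * N₁ * |θ| < 1 / (4 * q)

/-- The fraction pairs with denominators bounded by `N₁`, `N₂` that approximate some `α` with
`|α| ≤ H`. -/
def boundedPairs (l₁ l₂ δ₁ δ₂ N₁ N₂ H : ℝ) : Set FractionPair :=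
  {t | t.InBox N₁ N₂ ∧ ∃ α ∈ t.approxSet l₁ l₂ δ₁ δ₂, |α| ≤ H}

lemma sqrt_mul_sqrt_eq {a b d n H : ℝ} (ha : 0 ≤ a) (hb : 0 ≤ b) (hd : 0 ≤ d)
    (hH : 0 ≤ H) : √(2 * H * d / a) * √(2 * b * n * H) = 2 * H * (√(b / a) * √(d * n)) := by
  rw [← sqrt_mul (by positivity), ← sqrt_mul (by positivity),
    show 2 * H * d / a * (2 * b * n * H) = (2 * H) ^ 2 * (b / a * (d * n)) by ring,
    sqrt_mul (by positivity), sqrt_sq (by positivity)]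

namespace IsResolved

lemma left_ne_zero (h : IsResolved (l₁ / l₂) δ₁ δ₂ N₁ N₂ q) : l₁ ≠ 0 := by
  rintro rfl
  have := h.one_le
  norm_num at this

lemma right_ne_zero (h : IsResolved (l₁ / l₂) δ₁ δ₂ N₁ N₂ q) : l₂ ≠ 0 := by
  rintro rfl
  have := h.one_le
  norm_num at this

lemma abs_cross₁_mul_sub_cross₂_lt (h : IsResolved (l₁ / l₂) δ₁ δ₂ N₁ N₂ q) {t : FractionPair}
    (ht : t ∈ boundedPairs l₁ l₂ δ₁ δ₂ N₁ N₂ H) :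
    |t.cross₁ * (l₁ / l₂) - t.cross₂| < 1 / (4 * q) := by
  obtain ⟨hbox, α, hα, -⟩ := ht
  refine (FractionPair.abs_cross₁_mul_sub_cross₂_le h.right_ne_zero hα).trans_lt
    (lt_of_le_of_lt ?_ h.lt)
  have := h.δ₁_nonneg
  have := h.δ₂_nonneg
  gcongr
  exacts [hbox.q₂_le, hbox.q₁_le]

lemma cross_ne_zero (h : IsResolved θ δ₁ δ₂ N₁ N₂ q) {t : FractionPair} (hbox : t.InBox N₁ N₂)
    (hnear : |t.cross₁ * θ - t.cross₂| < 1 / (4 * q)) (ht : t.a₁ ≠ 0 ∨ t.a₂ ≠ 0) :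
    t.cross₁ ≠ 0 ∧ t.cross₂ ≠ 0 := by
  have hq₁ : (1 : ℝ) ≤ q := by exact_mod_cast h.denom.pos
  have cross₂_of_cross₁ (h₁ : t.cross₁ = 0) : t.cross₂ = 0 := by
    refine Int.abs_lt_one_iff.1 ?_
    have : |(t.cross₂ : ℝ)| < 1 := by
      rw [h₁, Int.cast_zero, zero_mul, zero_sub, abs_neg] at hnear
      exact hnear.trans_le ((div_le_one (by positivity)).2 (by linarith))
    exact_mod_cast this
  have cross₁_of_cross₂ (h₂ : t.cross₂ = 0) : t.cross₁ = 0 := by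
    refine Int.abs_lt_one_iff.1 ?_
    have : |(t.cross₁ : ℝ)| < 1 := by
      rw [h₂, Int.cast_zero, sub_zero, abs_mul, lt_div_iff₀ (by positivity)] at hnear
      refine lt_of_le_of_lt ?_ hnear
      calc |(t.cross₁ : ℝ)| = |(t.cross₁ : ℝ)| * 1 := (mul_one _).symm
        _ ≤ |(t.cross₁ : ℝ)| * (4 * q * |θ|) := by gcongr; exact h.one_le
        _ = _ := by ring
    exact_mod_cast this
  have not_both : ¬ (t.cross₁ = 0 ∧ t.cross₂ = 0) := by
    simp only [FractionPair.cross₁, FractionPair.cross₂, mul_eq_zero, Int.natCast_eq_zero,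
      hbox.q₁_pos.ne', hbox.q₂_pos.ne', or_false]
    tauto
  tauto

lemma volume_approxSet_le (h : IsResolved (l₁ / l₂) δ₁ δ₂ N₁ N₂ q) {t : FractionPair}
    (ht : t ∈ boundedPairs l₁ l₂ δ₁ δ₂ N₁ N₂ H) (h₁ : t.cross₁ ≠ 0) :
    volume (t.approxSet l₁ l₂ δ₁ δ₂) ≤
      ENNReal.ofReal (2 * √(2 * H * (δ₁ * δ₂) / |l₁|) * (1 / √|(t.cross₁ : ℝ)|)) := by
  obtain ⟨hbox, α, hα, hαH⟩ := ht
  have hl₁ := abs_pos.2 h.left_ne_zero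
  have hl₂ := abs_pos.2 h.right_ne_zero
  have hr : 0 < |(t.cross₁ : ℝ)| := abs_pos.2 (Int.cast_ne_zero.2 h₁)
  have hδ : 0 ≤ δ₁ * δ₂ := mul_nonneg h.δ₁_nonneg h.δ₂_nonneg
  have hq₁ : (0 : ℝ) < t.q₁ := by exact_mod_cast hbox.q₁_pos
  have hq₂ : (0 : ℝ) < t.q₂ := by exact_mod_cast hbox.q₂_pos
  have cross_le := FractionPair.abs_cross₁_le h.δ₂_le hα hαH
  refine (FractionPair.volume_approxSet_le h.left_ne_zero h.right_ne_zero h.δ₁_nonneg h.δ₂_nonneg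
    hbox).trans (ENNReal.ofReal_le_ofReal ?_)
  rw [mul_assoc 2, mul_one_div, ← sqrt_div' _ hr.le, div_div]
  gcongr 2 * √?_
  rw [div_le_div_iff₀ (by positivity) (by positivity)]
  calc δ₁ * δ₂ * (|l₁| * |(t.cross₁ : ℝ)|)
      ≤ δ₁ * δ₂ * (|l₁| * (2 * |l₂| * (t.q₁ * t.q₂) * H)) := by gcongr
    _ = _ := by ring

lemma abs_cross_le (h : IsResolved (l₁ / l₂) δ₁ δ₂ N₁ N₂ q) {t : FractionPair}
    (ht : t ∈ boundedPairs l₁ l₂ δ₁ δ₂ N₁ N₂ H) :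
    |(t.cross₁ : ℝ)| ≤ 2 * |l₂| * (N₁ * N₂) * H ∧ |(t.cross₂ : ℝ)| ≤ 2 * |l₁| * (N₁ * N₂) * H := by
  obtain ⟨hbox, α, hα, hαH⟩ := ht
  have hH : 0 ≤ H := (abs_nonneg α).trans hαH
  have denominators_le : (t.q₁ * t.q₂ : ℝ) ≤ N₁ * N₂ :=
    mul_le_mul hbox.q₁_le hbox.q₂_le (Nat.cast_nonneg _) ((Nat.cast_nonneg _).trans hbox.q₁_le)
  exact ⟨(FractionPair.abs_cross₁_le h.δ₂_le hα hαH).trans <| by gcongr ?_ * H; gcongr _ * ?_,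
    (FractionPair.abs_cross₂_le h.δ₁_le hα hαH).trans <| by gcongr ?_ * H; gcongr _ * ?_⟩

theorem sum_volume_approxSet_le (h : IsResolved (l₁ / l₂) δ₁ δ₂ N₁ N₂ q)
    (hK : ∀ n : ℕ, n ≤ 2 * (|l₁| + |l₂|) * (N₁ * N₂) * H → (n.divisors.card : ℝ) ≤ K)
    (hT : ∀ t ∈ T, t ∈ boundedPairs l₁ l₂ δ₁ δ₂ N₁ N₂ H) (hne : ∀ t ∈ T, t.a₁ ≠ 0 ∨ t.a₂ ≠ 0) :
    ∑ t ∈ T, volume (t.approxSet l₁ l₂ δ₁ δ₂) ≤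
      ENNReal.ofReal (32 * √(|l₂| / |l₁|) * K ^ 2 * H * √(δ₁ * δ₂ * (N₁ * N₂)) / q) := by
  rcases T.eq_empty_or_nonempty with rfl | ⟨u, hu⟩
  · simp
  obtain ⟨hbox, α, -, hα⟩ := hT u hu
  have hH : 0 ≤ H := (abs_nonneg α).trans hα
  have hN : 0 ≤ N₁ * N₂ := mul_nonneg ((Nat.cast_nonneg _).trans hbox.q₁_le)
    ((Nat.cast_nonneg _).trans hbox.q₂_le)
  have near := fun t ht => h.abs_cross₁_mul_sub_cross₂_lt (hT t ht)
  have nonzero := fun t ht => h.cross_ne_zero (hT t ht).1 (near t ht) (hne t ht)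
  have cross_le := fun t ht => h.abs_cross_le (hT t ht)
  have divisors_le {l : ℝ} (hl : |l| ≤ |l₁| + |l₂|) {r : ℤ}
      (hr : |(r : ℝ)| ≤ 2 * |l| * (N₁ * N₂) * H) : (r.natAbs.divisors.card : ℝ) ≤ K :=
    hK _ <| by rw [Nat.cast_natAbs, Int.cast_abs]; exact hr.trans (by gcongr)
  calc ∑ t ∈ T, volume (t.approxSet l₁ l₂ δ₁ δ₂)
      ≤ ∑ t ∈ T, ENNReal.ofReal (2 * √(2 * H * (δ₁ * δ₂) / |l₁|) * (1 / √|(t.cross₁ : ℝ)|)) :=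
        Finset.sum_le_sum fun t ht => h.volume_approxSet_le (hT t ht) (nonzero t ht).1
    _ = ENNReal.ofReal (2 * √(2 * H * (δ₁ * δ₂) / |l₁|) * ∑ t ∈ T, 1 / √|(t.cross₁ : ℝ)|) := by
        rw [Finset.mul_sum, ENNReal.ofReal_sum_of_nonneg fun _ _ => by positivity]
    _ ≤ ENNReal.ofReal (2 * √(2 * H * (δ₁ * δ₂) / |l₁|) *
          (K ^ 2 * (8 * √(2 * |l₂| * (N₁ * N₂) * H) / q))) := by
        gcongr
        exact h.denom.sum_one_div_sqrt_abs_cross₁_le near (fun t ht => (nonzero t ht).1)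
          (fun t ht => (nonzero t ht).2)
          (fun t ht => divisors_le (le_add_of_nonneg_left (abs_nonneg _)) (cross_le t ht).1)
          (fun t ht => divisors_le (le_add_of_nonneg_right (abs_nonneg _)) (cross_le t ht).2)
          fun t ht => (cross_le t ht).1
    _ = _ := by
        have hδ : 0 ≤ δ₁ * δ₂ := mul_nonneg h.δ₁_nonneg h.δ₂_nonneg
        congr 1
        linear_combination 16 * K ^ 2 / q *
          sqrt_mul_sqrt_eq (a := |l₁|) (b := |l₂|) (abs_nonneg _) (abs_nonneg _) hδ hH

end IsResolved

end CrossProducts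

section Covering

lemma measure_biUnion_le_of_sum_le {ι X : Type*} [Countable ι] [MeasurableSpace X] {μ : Measure X}
    {S : Set ι} {U : ι → Set X} {B : ENNReal}
    (hB : ∀ T : Finset ι, (∀ i ∈ T, i ∈ S) → ∑ i ∈ T, μ (U i) ≤ B) : μ (⋃ i ∈ S, U i) ≤ B := by
  refine (measure_biUnion_le μ S.to_countable U).trans ?_
  refine ENNReal.summable.tsum_le_of_sum_le fun T => ?_
  have mem : ∀ i ∈ T.map (.subtype (· ∈ S)), i ∈ S := fun i hi => by
    obtain ⟨j, -, rfl⟩ := Finset.mem_map.1 hi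
    exact j.2
  simpa only [Finset.sum_map, Function.Embedding.subtype_apply] using hB _ mem

lemma volume_le_of_volume_inter_Icc_le {A : Set ℝ} {R d B : ℝ} (hR : 0 ≤ R) (hd : 0 < d)
    (hA : ∀ α ∈ A, |α| ≤ R)
    (hB : ∀ x, volume (A ∩ Set.Icc x (x + d)) ≤ ENNReal.ofReal B) :
    volume A ≤ ENNReal.ofReal ((2 * R / d + 1) * B) := by
  set n : ℕ := ⌊2 * R / d⌋₊ + 1
  have cover : A ⊆ ⋃ j ∈ Finset.range n, A ∩ Set.Icc (-R + j * d) (-R + j * d + d) := by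
    intro α hα
    obtain ⟨hα₁, hα₂⟩ := abs_le.1 (hA α hα)
    have hnonneg : 0 ≤ (α + R) / d := div_nonneg (by linarith) hd.le
    have hfloor := (le_div_iff₀ hd).1 (Nat.floor_le hnonneg)
    have hfloor' := (div_lt_iff₀ hd).1 (Nat.lt_floor_add_one ((α + R) / d))
    simp only [Set.mem_iUnion]
    refine ⟨⌊(α + R) / d⌋₊, Finset.mem_range.2 (Nat.lt_succ_of_le (Nat.floor_le_floor ?_)),
      hα, by linarith, by linarith⟩
    gcongr
    linarith
  calc volume A ≤ ∑ j ∈ Finset.range n, volume (A ∩ Set.Icc (-R + j * d) (-R + j * d + d)) :=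
        (measure_mono cover).trans (measure_biUnion_finset_le _ _)
    _ ≤ n * ENNReal.ofReal B := by
        refine (Finset.sum_le_sum fun j _ => hB _).trans_eq ?_
        rw [Finset.sum_const, Finset.card_range, nsmul_eq_mul]
    _ ≤ ENNReal.ofReal ((2 * R / d + 1) * B) := by
        rw [ENNReal.ofReal_mul (by positivity), ← ENNReal.ofReal_natCast]
        gcongr
        push_cast [n]
        gcongr
        exact Nat.floor_le (by positivity)

variable {l₁ l₂ δ₁ δ₂ N₁ N₂ K d : ℝ} {q : ℕ} {A : Set ℝ}

-- All `α` in the window with given denominators are translated by one of them, which turns them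
-- into elements of size at most `d` approximated to twice the tolerance.
lemma exists_subset_biUnion_preimage_approxSet (hd : ∀ α ∈ A, ∀ β ∈ A, |α - β| ≤ d)
    (hA : ∀ α ∈ A, ∃ t : FractionPair, t.InBox N₁ N₂ ∧ α ∈ t.approxSet l₁ l₂ δ₁ δ₂) :
    ∃ τ : FractionPair → ℝ, A ⊆ ⋃ t ∈ boundedPairs l₁ l₂ (2 * δ₁) (2 * δ₂) N₁ N₂ d,
      (· + τ t) ⁻¹' t.approxSet l₁ l₂ (2 * δ₁) (2 * δ₂) := by
  have base (q₁ q₂ : ℕ) : ∃ β : ℝ, ∀ α ∈ A, ∀ a₁ a₂ : ℤ,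
      α ∈ FractionPair.approxSet l₁ l₂ δ₁ δ₂ ⟨q₁, q₂, a₁, a₂⟩ → |α - β| ≤ d ∧ ∃ b₁ b₂ : ℤ,
        α - β ∈ FractionPair.approxSet l₁ l₂ (2 * δ₁) (2 * δ₂) ⟨q₁, q₂, b₁, b₂⟩ := by
    by_cases h : ∃ β ∈ A, ∃ b₁ b₂ : ℤ,
        β ∈ FractionPair.approxSet l₁ l₂ δ₁ δ₂ ⟨q₁, q₂, b₁, b₂⟩
    · obtain ⟨β, hβA, b₁, b₂, hβ⟩ := h
      exact ⟨β, fun α hαA a₁ a₂ hα =>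
        ⟨hd α hαA β hβA, _, _, FractionPair.sub_mem_approxSet_sub hα hβ⟩⟩
    · exact ⟨0, fun α hαA a₁ a₂ hα => (h ⟨α, hαA, a₁, a₂, hα⟩).elim⟩
  choose β hβ using base
  refine ⟨fun t => -β t.q₁ t.q₂, fun α hαA => ?_⟩
  obtain ⟨t, hbox, hα⟩ := hA α hαA
  obtain ⟨hsmall, b₁, b₂, hb⟩ := hβ t.q₁ t.q₂ α hαA t.a₁ t.a₂ hα
  simp only [Set.mem_iUnion]
  exact ⟨⟨t.q₁, t.q₂, b₁, b₂⟩, ⟨⟨hbox.q₁_pos, hbox.q₂_pos, hbox.q₁_le, hbox.q₂_le⟩, _, hb, hsmall⟩,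
    by rwa [Set.mem_preimage, ← sub_eq_add_neg]⟩

lemma IsResolved.sum_volume_approxSet_le_add (h : IsResolved (l₁ / l₂) δ₁ δ₂ N₁ N₂ q)
    (hK : ∀ n : ℕ, n ≤ 2 * (|l₁| + |l₂|) * (N₁ * N₂) * d → (n.divisors.card : ℝ) ≤ K)
    (hd : 0 ≤ d) {T : Finset FractionPair} (hT : ∀ t ∈ T, t ∈ boundedPairs l₁ l₂ δ₁ δ₂ N₁ N₂ d) :
    ∑ t ∈ T, volume (t.approxSet l₁ l₂ δ₁ δ₂) ≤
      ENNReal.ofReal ((8 / √(|l₁| * |l₂|) + 32 * √(|l₂| / |l₁|) * K ^ 2 * d / q) *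
        √(δ₁ * δ₂ * (N₁ * N₂))) := by
  classical
  have hzero := FractionPair.sum_volume_approxSet_le_of_num_eq_zero h.left_ne_zero h.right_ne_zero
    h.δ₁_nonneg h.δ₂_nonneg (T := T.filter fun t => t.a₁ = 0 ∧ t.a₂ = 0)
    (fun t ht => (hT t (Finset.mem_filter.1 ht).1).1) fun t ht => (Finset.mem_filter.1 ht).2
  have hnonzero := h.sum_volume_approxSet_le (T := T.filter fun t => ¬ (t.a₁ = 0 ∧ t.a₂ = 0)) hK
    (fun t ht => hT t (Finset.mem_filter.1 ht).1)
    fun t ht => not_and_or.1 (Finset.mem_filter.1 ht).2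
  rw [← Finset.sum_filter_add_sum_filter_not T fun t => t.a₁ = 0 ∧ t.a₂ = 0]
  refine (add_le_add hzero hnonzero).trans_eq ?_
  rw [← ENNReal.ofReal_add (by positivity) (by positivity)]
  ring_nf

lemma sqrt_two_mul_mul_two_mul_mul (a b c : ℝ) : √(2 * a * (2 * b) * c) = 2 * √(a * b * c) := by
  rw [show 2 * a * (2 * b) * c = 2 ^ 2 * (a * b * c) by ring, sqrt_mul (by positivity),
    sqrt_sq zero_le_two]

lemma IsResolved.volume_le_of_abs_sub_le (h : IsResolved (l₁ / l₂) (2 * δ₁) (2 * δ₂) N₁ N₂ q)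
    (hK : ∀ n : ℕ, n ≤ 2 * (|l₁| + |l₂|) * (N₁ * N₂) * d → (n.divisors.card : ℝ) ≤ K)
    (hd : 0 ≤ d) (hAd : ∀ α ∈ A, ∀ β ∈ A, |α - β| ≤ d)
    (hA : ∀ α ∈ A, ∃ t : FractionPair, t.InBox N₁ N₂ ∧ α ∈ t.approxSet l₁ l₂ δ₁ δ₂) :
    volume A ≤ ENNReal.ofReal ((8 / √(|l₁| * |l₂|) + 32 * √(|l₂| / |l₁|) * K ^ 2 * d / q) *
      (2 * √(δ₁ * δ₂ * (N₁ * N₂)))) := by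
  obtain ⟨τ, hτ⟩ := exists_subset_biUnion_preimage_approxSet hAd hA
  refine (measure_mono hτ).trans (measure_biUnion_le_of_sum_le fun T hT => ?_)
  simp only [measure_preimage_add_right]
  rw [← sqrt_two_mul_mul_two_mul_mul]
  exact h.sum_volume_approxSet_le_add hK hd hT

lemma IsResolved.volume_le_of_le {y : ℝ} (h : IsResolved (l₁ / l₂) (2 * δ₁) (2 * δ₂) N₁ N₂ q)
    (hK₁ : 1 ≤ K)
    (hK : ∀ n : ℕ, n ≤ 2 * (|l₁| + |l₂|) * (N₁ * N₂) * q → (n.divisors.card : ℝ) ≤ K)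
    (hqy : q ≤ y) (hAy : ∀ α ∈ A, |α| ≤ 2 * y)
    (hA : ∀ α ∈ A, ∃ t : FractionPair, t.InBox N₁ N₂ ∧ α ∈ t.approxSet l₁ l₂ δ₁ δ₂) :
    volume A ≤ ENNReal.ofReal ((80 / √(|l₁| * |l₂|) + 320 * √(|l₂| / |l₁|)) * K ^ 2 * y *
      √(δ₁ * δ₂ * (N₁ * N₂)) / q) := by
  have hq : (0 : ℝ) < q := by exact_mod_cast h.denom.pos
  have hy : 0 < y := hq.trans_le hqy
  refine (volume_le_of_volume_inter_Icc_le (by positivity) hq hAy fun x =>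
    h.volume_le_of_abs_sub_le hK hq.le (fun α hα β hβ => ?_) fun α hα => hA α hα.1).trans
      (ENNReal.ofReal_le_ofReal ?_)
  · rw [abs_le]
    constructor <;> linarith [hα.2.1, hα.2.2, hβ.2.1, hβ.2.2]
  · rw [mul_div_cancel_right₀ _ hq.ne']
    have windows : 2 * (2 * y) / q + 1 ≤ 5 * y / q := by
      rw [← sub_nonneg, show 5 * y / q - (2 * (2 * y) / q + 1) = (y - q) / q by field_simp; ring]
      exact div_nonneg (by linarith) hq.le
    calc _ ≤ 5 * y / q * ((8 / √(|l₁| * |l₂|) * K ^ 2 + 32 * √(|l₂| / |l₁|) * K ^ 2) *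
          (2 * √(δ₁ * δ₂ * (N₁ * N₂)))) := by
          gcongr
          exact le_mul_of_one_le_right (by positivity) (one_le_pow₀ hK₁)
      _ = _ := by ring

lemma IsResolved.volume_le_of_abs_le (h : IsResolved (l₁ / l₂) δ₁ δ₂ N₁ N₂ q)
    (hK : ∀ n : ℕ, n ≤ 2 * (|l₁| + |l₂|) * (N₁ * N₂) * d → (n.divisors.card : ℝ) ≤ K)
    (hAd : ∀ α ∈ A, |α| ≤ d)
    (hA : ∀ α ∈ A, ∃ t : FractionPair, (t.a₁ ≠ 0 ∨ t.a₂ ≠ 0) ∧ t.InBox N₁ N₂ ∧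
      α ∈ t.approxSet l₁ l₂ δ₁ δ₂) :
    volume A ≤
      ENNReal.ofReal (32 * √(|l₂| / |l₁|) * K ^ 2 * d * √(δ₁ * δ₂ * (N₁ * N₂)) / q) := by
  have cover : A ⊆ ⋃ t ∈ {t ∈ boundedPairs l₁ l₂ δ₁ δ₂ N₁ N₂ d | t.a₁ ≠ 0 ∨ t.a₂ ≠ 0},
      t.approxSet l₁ l₂ δ₁ δ₂ := fun α hα => by
    obtain ⟨t, hne, hbox, ht⟩ := hA α hα
    exact Set.mem_biUnion ⟨⟨hbox, α, ht, hAd α hα⟩, hne⟩ ht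
  refine (measure_mono cover).trans (measure_biUnion_le_of_sum_le fun T hT => ?_)
  exact h.sum_volume_approxSet_le hK (fun t ht => (hT t ht).1) fun t ht => (hT t ht).2

theorem IsResolved.volume_le {y : ℝ} (h : IsResolved (l₁ / l₂) (2 * δ₁) (2 * δ₂) N₁ N₂ q)
    (hy : 0 < y) (hK₁ : 1 ≤ K) (hN₁ : 0 ≤ N₁) (hN₂ : 0 ≤ N₂)
    (hK : ∀ n : ℕ, n ≤ 4 * (|l₁| + |l₂|) * (N₁ * N₂) * q → (n.divisors.card : ℝ) ≤ K)
    (hAy : ∀ α ∈ A, |α| ≤ 2 * y)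
    (hA : ∀ α ∈ A, ∃ t : FractionPair, (t.a₁ ≠ 0 ∨ t.a₂ ≠ 0) ∧ t.InBox N₁ N₂ ∧
      α ∈ t.approxSet l₁ l₂ δ₁ δ₂) :
    volume A ≤ ENNReal.ofReal ((80 / √(|l₁| * |l₂|) + 320 * √(|l₂| / |l₁|)) * K ^ 2 * y *
      √(δ₁ * δ₂ * (N₁ * N₂)) / q) := by
  have hq : (0 : ℝ) < q := by exact_mod_cast h.denom.pos
  have hδ₁ : 0 ≤ δ₁ := by linarith [h.δ₁_nonneg]
  have hδ₂ : 0 ≤ δ₂ := by linarith [h.δ₂_nonneg]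
  have divisors_le {d : ℝ} (hd : d ≤ 2 * q) (n : ℕ)
      (hn : n ≤ 2 * (|l₁| + |l₂|) * (N₁ * N₂) * d) : (n.divisors.card : ℝ) ≤ K :=
    hK n <| hn.trans <| calc
      2 * (|l₁| + |l₂|) * (N₁ * N₂) * d ≤ 2 * (|l₁| + |l₂|) * (N₁ * N₂) * (2 * q) := by gcongr
      _ = _ := by ring
  rcases le_or_gt y q with hyq | hyq
  · refine (h.volume_le_of_abs_le (divisors_le (by linarith)) hAy fun α hα => ?_).trans
      (ENNReal.ofReal_le_ofReal ?_)
    · obtain ⟨t, hne, hbox, ht⟩ := hA α hα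
      exact ⟨t, hne, hbox, FractionPair.approxSet_mono (by linarith) (by linarith) ht⟩
    · rw [sqrt_two_mul_mul_two_mul_mul]
      calc 32 * √(|l₂| / |l₁|) * K ^ 2 * (2 * y) * (2 * √(δ₁ * δ₂ * (N₁ * N₂))) / q
          = (128 * √(|l₂| / |l₁|)) * K ^ 2 * y * √(δ₁ * δ₂ * (N₁ * N₂)) / q := by ring
        _ ≤ _ := by
          gcongr
          have : 0 ≤ 80 / √(|l₁| * |l₂|) := by positivity
          linarith [sqrt_nonneg (|l₂| / |l₁|)]
  · refine h.volume_le_of_le hK₁ (divisors_le (by linarith)) hyq.le hAy fun α hα => ?_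
    obtain ⟨t, -, ht⟩ := hA α hα
    exact ⟨t, ht⟩

end Covering

section Parameters

variable {X Z Z₁ Z₂ c c₁ c₂ θ : ℝ} {q : ℕ}

/-- The bound `c (X (log X) ^ 4 / Z) ^ 2` on the denominators of the approximations. -/
noncomputable def denomBound (c X Z : ℝ) : ℝ := c * (X * log X ^ 4 / Z) ^ 2

/-- The bound `c X (log X) ^ 10 / Z ^ 2` on the error of the approximations. -/
noncomputable def tolerance (c X Z : ℝ) : ℝ := c * X * log X ^ 10 / Z ^ 2

lemma denomBound_nonneg (hc : 0 ≤ c) : 0 ≤ denomBound c X Z :=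
  mul_nonneg hc (sq_nonneg _)

lemma tolerance_nonneg (hc : 0 ≤ c) (hX : 0 ≤ X) : 0 ≤ tolerance c X Z := by
  have : 0 ≤ log X ^ 10 := Even.pow_nonneg ⟨5, rfl⟩ _
  unfold tolerance
  positivity

lemma tolerance_mul_denomBound :
    tolerance c₂ X Z₁ * denomBound c₁ X Z₂ =
      c₁ * c₂ * (X ^ 3 * log X ^ 18) / (Z₁ ^ 2 * Z₂ ^ 2) := by
  simp only [tolerance, denomBound]
  ring

lemma sqrt_tolerance_mul_denomBound (hc₁ : 0 ≤ c₁) (hc₂ : 0 ≤ c₂) (hX : 0 ≤ X) :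
    √(tolerance c₂ X Z₁ * tolerance c₂ X Z₂ * (denomBound c₁ X Z₁ * denomBound c₁ X Z₂)) =
      c₁ * c₂ * (X ^ 3 * log X ^ 18) / (Z₁ ^ 2 * Z₂ ^ 2) := by
  rw [← tolerance_mul_denomBound, ← sqrt_sq (mul_nonneg (tolerance_nonneg hc₂ hX)
    (denomBound_nonneg hc₁))]
  simp only [tolerance, denomBound]
  ring_nf

lemma pow_five_mul_log_pow_ten_le_sq (hX : X = (q : ℝ) ^ 3) (hL : 0 ≤ log X)
    (hZ : X ^ ((5 : ℝ) / 6) * log X ^ 5 ≤ Z) : (q : ℝ) ^ 5 * log X ^ 10 ≤ Z ^ 2 := by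
  have hX₀ : 0 ≤ X := by rw [hX]; positivity
  have hq : (X ^ ((5 : ℝ) / 6)) ^ 2 = (q : ℝ) ^ 5 := by
    rw [← rpow_natCast, ← rpow_mul hX₀, hX, ← rpow_natCast, ← rpow_mul q.cast_nonneg,
      ← rpow_natCast]
    norm_num
  calc (q : ℝ) ^ 5 * log X ^ 10 = (X ^ ((5 : ℝ) / 6) * log X ^ 5) ^ 2 := by rw [mul_pow, hq]; ring
    _ ≤ Z ^ 2 := by gcongr

lemma tolerance_le (hc : 0 ≤ c) (hq : 0 < q) (hX : X = (q : ℝ) ^ 3) (hL : 0 < log X)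
    (hZ : (q : ℝ) ^ 5 * log X ^ 10 ≤ Z ^ 2) : tolerance c X Z ≤ c / q ^ 2 := by
  have hX₀ : 0 < X := by rw [hX]; positivity
  calc tolerance c X Z ≤ c * X * log X ^ 10 / (q ^ 5 * log X ^ 10) := by unfold tolerance; gcongr
    _ = c / q ^ 2 := by rw [mul_div_mul_right _ _ (by positivity), hX]; field_simp

lemma denomBound_le (hc : 0 ≤ c) (hq : 0 < q) (hX : X = (q : ℝ) ^ 3) (hL : 1 ≤ log X)
    (hZ : (q : ℝ) ^ 5 * log X ^ 10 ≤ Z ^ 2) : denomBound c X Z ≤ c * q := by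
  have : 0 < log X := by linarith
  unfold denomBound
  gcongr
  rw [div_pow]
  calc (X * log X ^ 4) ^ 2 / Z ^ 2 ≤ (X * log X ^ 4) ^ 2 / (q ^ 5 * log X ^ 10) := by gcongr
    _ = q / log X ^ 2 := by rw [hX]; field_simp
    _ ≤ q := div_le_self q.cast_nonneg (one_le_pow₀ hL)

lemma tolerance_mul_denomBound_le (hc₁ : 0 ≤ c₁) (hc₂ : 0 ≤ c₂) (hq : 0 < q)
    (hX : X = (q : ℝ) ^ 3) (hL : 0 < log X)
    (hZ₁ : (q : ℝ) ^ 5 * log X ^ 10 ≤ Z₁ ^ 2) (hZ₂ : (q : ℝ) ^ 5 * log X ^ 10 ≤ Z₂ ^ 2) :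
    tolerance c₂ X Z₁ * denomBound c₁ X Z₂ ≤ c₁ * c₂ / (q * log X ^ 2) := by
  have hX₀ : 0 < X := by rw [hX]; positivity
  rw [tolerance_mul_denomBound]
  calc c₁ * c₂ * (X ^ 3 * log X ^ 18) / (Z₁ ^ 2 * Z₂ ^ 2)
      ≤ c₁ * c₂ * (X ^ 3 * log X ^ 18) / (q ^ 5 * log X ^ 10 * (q ^ 5 * log X ^ 10)) := by gcongr
    _ = c₁ * c₂ / (q * log X ^ 2) := by rw [hX]; field_simp

theorem isResolved_of_le_log (hq : IsDirichletDenom θ q) (hθ : θ ≠ 0) (hc₁ : 0 ≤ c₁)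
    (hc₂ : 0 ≤ c₂) (hX : X = (q : ℝ) ^ 3)
    (hL : 1 + 12 * c₂ + 8 * c₁ * c₂ * (1 + |θ|) + 1 / |θ| ≤ log X)
    (hZ₁ : (q : ℝ) ^ 5 * log X ^ 10 ≤ Z₁ ^ 2) (hZ₂ : (q : ℝ) ^ 5 * log X ^ 10 ≤ Z₂ ^ 2) :
    IsResolved θ (2 * tolerance c₂ X Z₁) (2 * tolerance c₂ X Z₂) (denomBound c₁ X Z₁)
      (denomBound c₁ X Z₂) q := by
  have hq₁ : (1 : ℝ) ≤ q := by exact_mod_cast hq.pos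
  have hθ₀ : 0 < |θ| := abs_pos.2 hθ
  have hX₀ : 0 ≤ X := by rw [hX]; positivity
  have hcc : 0 ≤ 8 * c₁ * c₂ * (1 + |θ|) := by positivity
  have hθinv : 0 < 1 / |θ| := by positivity
  have hL₁ : 1 < log X := by linarith
  have log_le : log X ≤ 3 * q := by
    rw [hX, log_pow]
    push_cast
    linarith [log_le_sub_one_of_pos (zero_lt_one.trans_le hq₁)]
  have tolerance_le_quarter : c₂ / (q : ℝ) ^ 2 ≤ 1 / 4 := by
    rw [div_le_iff₀ (by positivity)]
    nlinarith
  have product_lt : c₁ * c₂ / (q * log X ^ 2) * (2 * (1 + |θ|)) < 1 / (4 * q) := by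
    rw [div_mul_eq_mul_div, div_lt_div_iff₀ (by positivity) (by positivity)]
    have : 8 * c₁ * c₂ * (1 + |θ|) < log X ^ 2 := by nlinarith
    calc c₁ * c₂ * (2 * (1 + |θ|)) * (4 * q) = 8 * c₁ * c₂ * (1 + |θ|) * q := by ring
      _ < log X ^ 2 * q := by gcongr
      _ = _ := by ring
  refine ⟨hq, ?_, ?_, ?_, ?_, ?_, ?_⟩
  · exact mul_nonneg zero_le_two (tolerance_nonneg hc₂ hX₀)
  · exact mul_nonneg zero_le_two (tolerance_nonneg hc₂ hX₀)
  · linarith [tolerance_le hc₂ hq.pos hX (by linarith) hZ₁]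
  · linarith [tolerance_le hc₂ hq.pos hX (by linarith) hZ₂]
  · have : 1 / |θ| ≤ 4 * q := by linarith
    rwa [div_le_iff₀ hθ₀] at this
  · refine lt_of_le_of_lt ?_ product_lt
    have h₁ := tolerance_mul_denomBound_le hc₁ hc₂ hq.pos hX (by linarith) hZ₁ hZ₂
    have h₂ := tolerance_mul_denomBound_le hc₁ hc₂ hq.pos hX (by linarith) hZ₂ hZ₁
    linarith [mul_le_mul_of_nonneg_right h₂ hθ₀.le]

lemma log_pow_le_mul_rpow {η : ℝ} {n : ℕ} (hX : 1 ≤ X) (hη : 0 < η) (hn : n ≠ 0) :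
    log X ^ n ≤ (n / η) ^ n * X ^ η := by
  have hX₀ : 0 ≤ X := by linarith
  calc log X ^ n ≤ (X ^ (η / n) / (η / n)) ^ n := by
        have := log_nonneg hX
        gcongr
        exact log_le_rpow_div hX₀ (by positivity)
    _ = (n / η) ^ n * (X ^ (η / n)) ^ n := by rw [← mul_pow]; congr 1; field_simp
    _ = (n / η) ^ n * X ^ η := by
        rw [← rpow_mul_natCast hX₀, div_mul_cancel₀ η (by exact_mod_cast hn)]

lemma cube_rpow_eight_thirds (hq : 0 < q) (hX : X = (q : ℝ) ^ 3) :
    X ^ ((8 : ℝ) / 3) = X ^ 3 / q := by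
  have : X ^ ((8 : ℝ) / 3) = (q : ℝ) ^ 8 := by
    rw [hX, ← rpow_natCast, ← rpow_mul q.cast_nonneg, ← rpow_natCast]
    norm_num
  rw [this, hX]
  field_simp

lemma four_mul_denomBound_mul_le {s : ℝ} (hs : 0 ≤ s) (hc : 0 ≤ c) (hq : 0 < q)
    (hX : X = (q : ℝ) ^ 3) (hL : 1 ≤ log X)
    (hZ₁ : (q : ℝ) ^ 5 * log X ^ 10 ≤ Z₁ ^ 2) (hZ₂ : (q : ℝ) ^ 5 * log X ^ 10 ≤ Z₂ ^ 2) :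
    4 * s * (denomBound c X Z₁ * denomBound c X Z₂) * q ≤ (1 + 4 * s * c ^ 2) * X := by
  have hX₀ : 0 ≤ X := by rw [hX]; positivity
  calc 4 * s * (denomBound c X Z₁ * denomBound c X Z₂) * q
      ≤ 4 * s * (c * q * (c * q)) * q := by
        gcongr
        exacts [denomBound_nonneg hc, denomBound_le hc hq hX hL hZ₁, denomBound_le hc hq hX hL hZ₂]
    _ = 4 * s * c ^ 2 * X := by rw [hX]; ring
    _ ≤ (1 + 4 * s * c ^ 2) * X := by gcongr; linarith

lemma mul_sq_mul_sqrt_div_le {ε S D w y : ℝ} (hε : 0 < ε) (hS : 0 ≤ S) (hw : 0 ≤ w)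
    (hy : 0 ≤ y) (hc₁ : 0 ≤ c₁) (hc₂ : 0 ≤ c₂) (hq : 0 < q) (hX : X = (q : ℝ) ^ 3) :
    S * (D * (w * X) ^ (ε / 4)) ^ 2 * y *
        √(tolerance c₂ X Z₁ * tolerance c₂ X Z₂ * (denomBound c₁ X Z₁ * denomBound c₁ X Z₂)) / q ≤
      S * (D * w ^ (ε / 4)) ^ 2 * (c₁ * c₂) * (36 / ε) ^ 18 * y * X ^ ((8 : ℝ) / 3 + ε) /
        (Z₁ ^ 2 * Z₂ ^ 2) := by
  have hX₁ : 1 ≤ X := by rw [hX]; exact one_le_pow₀ (by exact_mod_cast hq)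
  have hX₀ : 0 < X := by linarith
  have log_pow_le : log X ^ 18 ≤ (36 / ε) ^ 18 * X ^ (ε / 2) := by
    convert log_pow_le_mul_rpow hX₁ (half_pos hε) (n := 18) (by norm_num) using 3
    push_cast
    field_simp
    norm_num
  have rpow_split : X ^ ((8 : ℝ) / 3 + ε) = X ^ 3 / q * (X ^ (ε / 4)) ^ 2 * X ^ (ε / 2) := by
    rw [rpow_add hX₀, cube_rpow_eight_thirds hq hX, ← rpow_mul_natCast hX₀.le, mul_assoc,
      ← rpow_add hX₀]
    ring_nf
  rw [sqrt_tolerance_mul_denomBound hc₁ hc₂ hX₀.le, rpow_split, mul_rpow hw hX₀.le]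
  calc _ ≤ S * (D * (w ^ (ε / 4) * X ^ (ε / 4))) ^ 2 * y *
        (c₁ * c₂ * (X ^ 3 * ((36 / ε) ^ 18 * X ^ (ε / 2))) / (Z₁ ^ 2 * Z₂ ^ 2)) / q := by gcongr
    _ = _ := by ring

end Parameters

theorem measure_lemma_general (l₁ l₂ : ℝ) (hl₁ : l₁ ≠ 0) (hl₂ : l₂ ≠ 0) (ε : ℝ) (hε : 0 < ε)
    (c₁ c₂ : ℝ) (hc₁ : 0 < c₁) (hc₂ : 0 < c₂) :
    ∃ C > 0, ∃ X₀ : ℝ, ∀ X ≥ X₀, ∀ q : ℕ, IsDirichletDenom (l₁ / l₂) q → X = (q : ℝ) ^ 3 →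
      ∀ Z₁ Z₂ y : ℝ, 0 < y →
        X ^ ((5 : ℝ) / 6) * Real.log X ^ 5 ≤ Z₁ →
        X ^ ((5 : ℝ) / 6) * Real.log X ^ 5 ≤ Z₂ →
        ∀ A : Set ℝ, (∀ α ∈ A, |α| ≤ 2 * y) →
          (∀ α ∈ A, ∃ a₁ a₂ : ℤ, ∃ q₁ q₂ : ℕ,
            0 < q₁ ∧ 0 < q₂ ∧ (a₁ ≠ 0 ∨ a₂ ≠ 0) ∧
            (q₁ : ℝ) ≤ c₁ * (X * Real.log X ^ 4 / Z₁) ^ 2 ∧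
            (q₂ : ℝ) ≤ c₁ * (X * Real.log X ^ 4 / Z₂) ^ 2 ∧
            |(q₁ : ℝ) * l₁ * α - a₁| ≤ c₂ * X * Real.log X ^ 10 / Z₁ ^ 2 ∧
            |(q₂ : ℝ) * l₂ * α - a₂| ≤ c₂ * X * Real.log X ^ 10 / Z₂ ^ 2) →
          volume A ≤ ENNReal.ofReal (C * y * X ^ ((8 : ℝ) / 3 + ε) / (Z₁ ^ 2 * Z₂ ^ 2)) := by
  obtain ⟨D, hD, card_divisors_le⟩ := exists_card_divisors_le_mul_rpow (ε := ε / 4) (by positivity)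
  set θ := l₁ / l₂
  set S := 80 / √(|l₁| * |l₂|) + 320 * √(|l₂| / |l₁|)
  set w := 1 + 4 * (|l₁| + |l₂|) * c₁ ^ 2
  have hw : 1 ≤ w := le_add_of_nonneg_right (by positivity)
  refine ⟨S * (D * w ^ (ε / 4)) ^ 2 * (c₁ * c₂) * (36 / ε) ^ 18, by positivity,
    exp (1 + 12 * c₂ + 8 * c₁ * c₂ * (1 + |θ|) + 1 / |θ|), ?_⟩
  intro X hX q hq hXq Z₁ Z₂ y hy hZ₁ hZ₂ A hAy hA
  have hX₁ : 1 ≤ X := by rw [hXq]; exact one_le_pow₀ (by exact_mod_cast hq.pos)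
  have hL := (le_log_iff_exp_le (zero_lt_one.trans_le hX₁)).2 hX
  have hL₁ : 1 ≤ log X := by
    refine le_trans ?_ hL
    rw [add_assoc, add_assoc]
    exact le_add_of_nonneg_right (by positivity)
  replace hZ₁ := pow_five_mul_log_pow_ten_le_sq hXq (zero_le_one.trans hL₁) hZ₁
  replace hZ₂ := pow_five_mul_log_pow_ten_le_sq hXq (zero_le_one.trans hL₁) hZ₂
  refine (IsResolved.volume_le (K := D * (w * X) ^ (ε / 4))
    (isResolved_of_le_log hq (div_ne_zero hl₁ hl₂) hc₁.le hc₂.le hXq hL hZ₁ hZ₂) hy ?_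
    (denomBound_nonneg hc₁.le) (denomBound_nonneg hc₁.le) (fun n hn => ?_) hAy
    fun α hα => ?_).trans (ENNReal.ofReal_le_ofReal ?_)
  · exact one_le_mul_of_one_le_of_one_le hD
      (one_le_rpow (one_le_mul_of_one_le_of_one_le hw hX₁) (by positivity))
  · refine (card_divisors_le n).trans ?_
    gcongr
    exact hn.trans (four_mul_denomBound_mul_le (by positivity) hc₁.le hq.pos hXq hL₁ hZ₁ hZ₂)
  · obtain ⟨a₁, a₂, q₁, q₂, hq₁, hq₂, hne, hN₁, hN₂, hδ₁, hδ₂⟩ := hA α hα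
    exact ⟨⟨q₁, q₂, a₁, a₂⟩, hne, ⟨hq₁, hq₂, hN₁, hN₂⟩, hδ₁, hδ₂⟩
  · exact mul_sq_mul_sqrt_div_le hε (by positivity) (by positivity) hy.le hc₁.le hc₂.le hq.pos hXq

theorem measure_lemma (l₁ l₂ : ℝ) (hl₁ : l₁ ≠ 0) (hl₂ : l₂ ≠ 0)
    (hirr : Irrational (l₁ / l₂)) (ε : ℝ) (hε : 0 < ε) (c₁ c₂ : ℝ)
    (hc₁ : 0 < c₁) (hc₂ : 0 < c₂) :
    ∃ C > 0, ∃ X₀ : ℝ, ∀ X ≥ X₀, ∀ q m : ℕ, 0 < q →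
      (q : ℝ) = (GenContFract.of (l₁ / l₂)).dens m →
      X = (q : ℝ) ^ 3 →
      ∀ Z₁ Z₂ y : ℝ, 0 < y →
        X ^ ((5 : ℝ) / 6) * Real.log X ^ 5 ≤ Z₁ →
        X ^ ((5 : ℝ) / 6) * Real.log X ^ 5 ≤ Z₂ →
        ∀ A : Set ℝ, MeasurableSet A →
          A ⊆ {α : ℝ | y < |α| ∧ |α| ≤ 2 * y} →
          (∀ α ∈ A, ∃ a₁ a₂ : ℤ, ∃ q₁ q₂ : ℕ,
            0 < q₁ ∧ 0 < q₂ ∧ Int.gcd a₁ q₁ = 1 ∧ Int.gcd a₂ q₂ = 1 ∧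
            a₁ ≠ 0 ∧ a₂ ≠ 0 ∧
            (q₁ : ℝ) ≤ c₁ * (X * Real.log X ^ 4 / Z₁) ^ 2 ∧
            (q₂ : ℝ) ≤ c₁ * (X * Real.log X ^ 4 / Z₂) ^ 2 ∧
            |(q₁ : ℝ) * l₁ * α - a₁| ≤ c₂ * X * Real.log X ^ 10 / Z₁ ^ 2 ∧
            |(q₂ : ℝ) * l₂ * α - a₂| ≤ c₂ * X * Real.log X ^ 10 / Z₂ ^ 2) →
          volume A ≤ ENNReal.ofReal (C * y * X ^ ((8 : ℝ) / 3 + ε) / (Z₁ ^ 2 * Z₂ ^ 2)) := by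
  obtain ⟨C, hC, X₀, hX₀⟩ := measure_lemma_general l₁ l₂ hl₁ hl₂ ε hε c₁ c₂ hc₁ hc₂
  refine ⟨C, hC, X₀, fun X hX q m hq hqm hXq Z₁ Z₂ y hy hZ₁ hZ₂ A _ hAy hA =>
    hX₀ X hX q (isDirichletDenom_of_irrational hirr hq hqm) hXq Z₁ Z₂ y hy hZ₁ hZ₂ A
      (fun α hα => (hAy hα).2) fun α hα => ?_⟩
  obtain ⟨a₁, a₂, q₁, q₂, hq₁, hq₂, -, -, ha₁, -, happrox⟩ := hA α hα
  exact ⟨a₁, a₂, q₁, q₂, hq₁, hq₂, Or.inl ha₁, happrox⟩
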